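/- arXiv:cs/0612119 — 2 statements merged into one kernel-verified Lean document; each statement's English description precedes it below -/
import Mathlib

section
/- Let A, B ∈ D[X] have degree d and valuation 0, let (S_i)_{−1 ≤ i ≤ d} be their sequence of symmetric subresultants, and suppose the pair (S_j, S_{j+1}) is (α,β)-defective with α = 0 and β > 1. If j > 0, then S_j(0)^{k−1}·S_{j+k} = S_{j+1}(0)^{k−1}·S_{j+1} for k = 2, …, β−1. If j = 0, then S_k = S_1(0)^{k−1}·S_1 for k = 2, …, β−1. -/
open Polynomial

/-- The `2j × 2j` square submatrix `Sylv_{j,ℓ}(A,B)` of the Sylvester-type matrix of `A` and `B`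
(of formal degree `d`): rows are the coefficient vectors of `A, XA, …, X^{j-1}A, B, …, X^{j-1}B`,
keeping the columns of degrees `0, …, j-2`, the column of degree `j-1+ℓ`, and the columns of
degrees `d, …, d+j-1`. -/
noncomputable def sylvMat {R : Type*} [CommRing R] (A B : R[X]) (d j ℓ : ℕ) :
    Matrix (Fin (2 * j)) (Fin (2 * j)) R := fun r c =>
  (if (r : ℕ) < j then X ^ (r : ℕ) * A else X ^ ((r : ℕ) - j) * B).coeff
    (if (c : ℕ) < j - 1 then (c : ℕ)
     else if (c : ℕ) = j - 1 then j - 1 + ℓ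
     else d + ((c : ℕ) - j))

/-- The sequence of symmetric subresultants of `A` and `B` (of formal degree `d`):
`S_0 = B` and `S_j = ∑_{ℓ=0}^{d-j} det (Sylv_{j,ℓ}(A,B)) · X^ℓ` for `1 ≤ j`. -/
noncomputable def symSubres {R : Type*} [CommRing R] (A B : R[X]) (d j : ℕ) : R[X] :=
  if j = 0 then B
  else ∑ ℓ ∈ Finset.range (d - j + 1), C (sylvMat A B d j ℓ).det * X ^ ℓ

/-- The pair `(S_j, S_{j+1})` of symmetric subresultants of `A`, `B` (formal degree `d`) is
`(α,β)`-defective: `v(S_j) = 0`, `deg S_j = d - j`, `v(S_{j+1}) = α`, `deg S_{j+1} = d - j - β`. -/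
def IsDefective {R : Type*} [CommRing R] (A B : R[X]) (d j α β : ℕ) : Prop :=
  (symSubres A B d j).coeff 0 ≠ 0 ∧
  (symSubres A B d j).natDegree + j = d ∧
  symSubres A B d (j + 1) ≠ 0 ∧
  (symSubres A B d (j + 1)).natTrailingDegree = α ∧
  (symSubres A B d (j + 1)).natDegree + β + j = d

/-!
Cofactor expansion along the column of `Sylv_{n+1,ℓ}(A,B)` that depends on `ℓ` gives a Bézout
relation `U A + V B = X^n S_{n+1}` with `deg U, deg V ≤ n`, in which the coefficient of `X^n` in `V`
is `-a_d P_n`, where `P_n` is the principal coefficient, that is `P_0 = 1` and `P_n = S_n(0)` for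
`n > 0`. Conversely, Cramer's rule shows that any relation `U A + V B = X^n S` with
`deg U, deg V ≤ n` and `deg S < d - n` forces `co_n(V) S_{n+1} = -a_d P_n S`.

If `deg S_{j+1} ≤ d - j - k`, then the Bézout relation of `S_{j+1}`, multiplied by `X^{k-1}`,
satisfies these bounds for `n = j + k - 1`. Cancelling `-a_d` leaves
`P_j S_{j+k} = P_{j+k-1} S_{j+1}`, and the constant coefficients of these identities turn
`P_j^{k-1} S_{j+k}` into `P_{j+1}^{k-1} S_{j+1}`.
-/

section Determinants

variable {R : Type*} [CommRing R]

open Matrix in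
lemma mul_det_eq_mul_adjugate_of_vecMul_eq_single {ι : Type*} [Fintype ι] [DecidableEq ι]
    {M : Matrix ι ι R} {c : ι → R} {i : ι} {x : R} (h : c ᵥ* M = Pi.single i x) (r : ι) :
    c r * M.det = x * M.adjugate i r := by
  have hr := congrFun (congrArg (· ᵥ* M.adjugate) h) r
  simpa [vecMul_vecMul, mul_adjugate, vecMul_smul, single_vecMul, mul_comm] using hr

lemma det_eq_mul_det_submatrix_of_column_eq_zero {n : ℕ}
    (M : Matrix (Fin (n + 1)) (Fin (n + 1)) R) (i j : Fin (n + 1)) (h : ∀ i' ≠ i, M i' j = 0) :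
    M.det = (-1) ^ (i + j : ℕ) * M i j * (M.submatrix i.succAbove j.succAbove).det := by
  rw [Matrix.det_succ_column M j, Finset.sum_eq_single i (fun i' _ hi' ↦ by simp [h i' hi'])
    (by simp)]

end Determinants

/-- The polynomial whose coefficients form row `r` of the Sylvester-type matrices
`sylvMat A B d j ℓ`, that is, the `r`-th term of `A, XA, …, X^{j-1}A, B, XB, …, X^{j-1}B`. -/
noncomputable def sylvRow {R : Type*} [CommRing R] (A B : R[X]) (j r : ℕ) : R[X] :=
  if r < j then X ^ r * A else X ^ (r - j) * B

/-- The degree of the monomial to which column `c` of `sylvMat A B d j ℓ` belongs. -/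
def sylvColDegree (d j ℓ c : ℕ) : ℕ :=
  if c < j - 1 then c else if c = j - 1 then j - 1 + ℓ else d + (c - j)

/-- The index of the column of `sylvMat A B d (n + 1) ℓ` that depends on `ℓ`. -/
def sylvMid (n : ℕ) : Fin (2 * (n + 1)) := ⟨n, by omega⟩

/-- The index of the row of `sylvMat A B d (n + 1) ℓ` that holds the coefficients of `X^n B`. -/
def sylvLast (n : ℕ) : Fin (2 * (n + 1)) := ⟨2 * n + 1, by omega⟩

/-- The embedding of indices that skips `sylvMid n` and `sylvLast n`. -/
def sylvSkip (n : ℕ) (i : Fin (2 * n)) : Fin (2 * (n + 1)) :=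
  ⟨if (i : ℕ) < n then i else i + 1, by split_ifs <;> omega⟩

/-- The principal coefficient of the `n`-th symmetric subresultant: it is `S_n(0)` for `0 < n`, but
the empty determinant `1` for `n = 0`, where the convention `S_0 = B` breaks the pattern. -/
noncomputable def principalCoeff {R : Type*} [CommRing R] (A B : R[X]) (d n : ℕ) : R :=
  (sylvMat A B d n 0).det

/-- The coordinates of `U * A + V * B` with respect to the rows of `sylvMat A B d j ℓ`, for `U` and
`V` of degree less than `j`. -/
noncomputable def sylvCoord {R : Type*} [CommRing R] (U V : R[X]) (j r : ℕ) : R :=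
  if r < j then U.coeff r else V.coeff (r - j)

section SymmetricSubresultants

variable {R : Type*} [CommRing R] {A B U V S : R[X]} {d j k n ℓ : ℕ}

lemma sylvMat_apply (r c : Fin (2 * j)) :
    sylvMat A B d j ℓ r c = (sylvRow A B j r).coeff (sylvColDegree d j ℓ c) := rfl

lemma principalCoeff_zero : principalCoeff A B d 0 = 1 :=
  Matrix.det_isEmpty (n := Fin 0)

lemma sylvColDegree_of_lt {c : ℕ} (hc : c < n) : sylvColDegree d (n + 1) ℓ c = c := by
  simp [sylvColDegree, hc]

lemma sylvColDegree_mid : sylvColDegree d (n + 1) ℓ (sylvMid n) = n + ℓ := by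
  simp [sylvColDegree, sylvMid]

lemma sylvColDegree_of_gt {c : ℕ} (hc : n < c) :
    sylvColDegree d (n + 1) ℓ c = d + (c - (n + 1)) := by
  simp [sylvColDegree, hc.not_gt, hc.ne']

lemma sylvColDegree_last : sylvColDegree d (n + 1) ℓ (sylvLast n) = d + n := by
  rw [sylvColDegree_of_gt (by simp only [sylvLast]; omega)]
  simp only [sylvLast]
  omega

lemma natDegree_sylvRow_le (hA : A.natDegree ≤ d) (hB : B.natDegree ≤ d) {r : ℕ}
    (hr : r < 2 * (n + 1)) : (sylvRow A B (n + 1) r).natDegree ≤ d + n := by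
  unfold sylvRow
  split_ifs
  · exact (natDegree_mul_le_of_le (natDegree_X_pow_le r) hA).trans (by omega)
  · exact (natDegree_mul_le_of_le (natDegree_X_pow_le _) hB).trans (by omega)

lemma coeff_sylvRow_add (hA : A.natDegree ≤ d) (hB : B.natDegree ≤ d) {r : ℕ}
    (hr : r < 2 * n + 1) :
    (sylvRow A B (n + 1) r).coeff (d + n) = if r = n then A.coeff d else 0 := by
  rcases eq_or_ne r n with rfl | hrn
  · rw [if_pos rfl, sylvRow, if_pos r.lt_succ_self, coeff_X_pow_mul]
  · unfold sylvRow
    split_ifs <;> rw [coeff_X_pow_mul', if_pos (by omega)] <;>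
      exact coeff_eq_zero_of_natDegree_lt (by omega)

lemma val_sylvSkip (i : Fin (2 * n)) :
    (sylvSkip n i : ℕ) = if (i : ℕ) < n then (i : ℕ) else i + 1 := rfl

lemma castSucc_succAbove_eq_sylvSkip (i : Fin (2 * n)) :
    ((⟨n, by omega⟩ : Fin (2 * n + 1)).succAbove i).castSucc = sylvSkip n i := by
  ext
  simp only [sylvSkip, Fin.succAbove, Fin.lt_def, Fin.val_castSucc]
  split_ifs <;> rfl

lemma sylvMat_succ_submatrix_sylvSkip :
    (sylvMat A B d (n + 1) ℓ).submatrix (sylvSkip n) (sylvSkip n) = sylvMat A B d n 0 := by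
  ext r c
  have hc := c.2
  have hrow : sylvRow A B (n + 1) (sylvSkip n r) = sylvRow A B n r := by
    rw [val_sylvSkip]
    unfold sylvRow
    split_ifs <;> first | rfl | omega | rw [Nat.add_sub_add_right]
  have hcol : sylvColDegree d (n + 1) ℓ (sylvSkip n c) = sylvColDegree d n 0 c := by
    rw [val_sylvSkip]
    unfold sylvColDegree
    split_ifs <;> omega
  rw [Matrix.submatrix_apply, sylvMat_apply, sylvMat_apply, hrow, hcol]

lemma adjugate_sylvMat_mid_last (hA : A.natDegree ≤ d) (hB : B.natDegree ≤ d) :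
    (sylvMat A B d (n + 1) ℓ).adjugate (sylvMid n) (sylvLast n) =
      -(A.coeff d * principalCoeff A B d n) := by
  let M : Matrix (Fin (2 * n + 2)) (Fin (2 * n + 2)) R := sylvMat A B d (n + 1) ℓ
  let mid : Fin (2 * n + 1) := ⟨n, by omega⟩
  let N := M.submatrix Fin.castSucc mid.castSucc.succAbove
  have hlast (r : Fin (2 * n + 1)) : N r (Fin.last _) = if (r : ℕ) = n then A.coeff d else 0 := by
    have hcol : mid.castSucc.succAbove (Fin.last _) = sylvLast n := by
      rw [Fin.succAbove_of_le_castSucc _ _ (Fin.castSucc_le_castSucc_iff.2 (Fin.le_last _))]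
      rfl
    change (sylvRow A B (n + 1) r).coeff
      (sylvColDegree d (n + 1) ℓ (mid.castSucc.succAbove (Fin.last _))) = _
    rw [hcol, ← coeff_sylvRow_add hA hB r.2]
    exact congrArg _ sylvColDegree_last
  have hsub : N.submatrix mid.succAbove Fin.castSucc = sylvMat A B d n 0 := by
    rw [← sylvMat_succ_submatrix_sylvSkip (ℓ := ℓ)]
    ext r c
    simp only [N, mid, Matrix.submatrix_apply, Fin.castSucc_succAbove_castSucc,
      castSucc_succAbove_eq_sylvSkip]
    rfl
  have hdet : N.det = (-1) ^ (n + 2 * n) * A.coeff d * principalCoeff A B d n := by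
    rw [det_eq_mul_det_submatrix_of_column_eq_zero N mid (Fin.last _), hlast, if_pos rfl,
      Fin.succAbove_last, hsub, principalCoeff, Fin.val_last]
    intro r hr
    rw [hlast, if_neg (fun h ↦ hr (Fin.ext h))]
  have hsign : (-1 : R) ^ (2 * n + 1 + n) * (-1) ^ (n + 2 * n) = -1 := by
    rw [← pow_add]
    exact Odd.neg_one_pow ⟨3 * n, by ring⟩
  calc M.adjugate mid.castSucc (Fin.last _)
    _ = (-1) ^ (2 * n + 1 + n) * N.det := by
      rw [Matrix.adjugate_fin_succ_eq_det_submatrix, Fin.succAbove_last]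
      rfl
    _ = _ := by rw [hdet]; linear_combination A.coeff d * principalCoeff A B d n * hsign

lemma sum_C_sylvCoord_mul_sylvRow (hU : U.natDegree < j) (hV : V.natDegree < j) :
    ∑ r : Fin (2 * j), C (sylvCoord U V j r) * sylvRow A B j r = U * A + V * B := by
  rw [Fin.sum_univ_eq_sum_range (fun r ↦ C (sylvCoord U V j r) * sylvRow A B j r), two_mul,
    Finset.sum_range_add]
  congr 1
  · conv_rhs => rw [U.as_sum_range_C_mul_X_pow' hU, Finset.sum_mul]
    refine Finset.sum_congr rfl fun r hr ↦ ?_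
    simp [sylvCoord, sylvRow, Finset.mem_range.1 hr, mul_assoc]
  · conv_rhs => rw [V.as_sum_range_C_mul_X_pow' hV, Finset.sum_mul]
    refine Finset.sum_congr rfl fun r _ ↦ ?_
    simp [sylvCoord, sylvRow, mul_assoc]

open Matrix in
lemma sylvCoord_vecMul_sylvMat (hU : U.natDegree < j) (hV : V.natDegree < j) (c : Fin (2 * j)) :
    ((fun r : Fin (2 * j) ↦ sylvCoord U V j r) ᵥ* sylvMat A B d j ℓ) c =
      (U * A + V * B).coeff (sylvColDegree d j ℓ c) := by
  simp only [← sum_C_sylvCoord_mul_sylvRow hU hV, finsetSum_coeff, coeff_C_mul, ← sylvMat_apply]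
  rfl

lemma sylvCoord_last (U V : R[X]) (n : ℕ) :
    sylvCoord U V (n + 1) (sylvLast n) = V.coeff n := by
  rw [sylvCoord, sylvLast, if_neg (by simp only; omega)]
  congr 1
  simp only
  omega

lemma exists_sylvCoord_eq (c : Fin (2 * (n + 1)) → R) :
    ∃ U V : R[X], U.natDegree ≤ n ∧ V.natDegree ≤ n ∧
      ∀ r : Fin (2 * (n + 1)), sylvCoord U V (n + 1) r = c r := by
  let c' : ℕ → R := Function.extend Fin.val c 0
  have hc' (r : Fin (2 * (n + 1))) : c' r = c r := Fin.val_injective.extend_apply c 0 r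
  have hdeg (f : ℕ → R) : (∑ i ∈ Finset.range (n + 1), C (f i) * X ^ i).natDegree ≤ n :=
    natDegree_sum_le_of_forall_le _ _ fun i hi ↦
      (natDegree_C_mul_X_pow_le _ i).trans (Finset.mem_range_succ_iff.1 hi)
  refine ⟨∑ i ∈ Finset.range (n + 1), C (c' i) * X ^ i,
    ∑ i ∈ Finset.range (n + 1), C (c' (n + 1 + i)) * X ^ i, hdeg _, hdeg _, fun r ↦ ?_⟩
  have hr := r.2
  simp only [sylvCoord, finsetSum_coeff, coeff_C_mul_X_pow, Finset.sum_ite_eq, Finset.mem_range]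
  split_ifs
  · exact hc' r
  · rw [Nat.add_sub_of_le (by omega), hc']
  · omega

lemma sum_adjugate_mul_coeff_sylvRow (e : ℕ) :
    ∑ r, (sylvMat A B d (n + 1) 0).adjugate (sylvMid n) r * (sylvRow A B (n + 1) r).coeff e =
      ((sylvMat A B d (n + 1) 0).updateCol (sylvMid n)
        fun r ↦ (sylvRow A B (n + 1) r).coeff e).det := by
  rw [← Matrix.cramer_apply, Matrix.cramer_eq_adjugate_mulVec]
  rfl

lemma sum_adjugate_mul_coeff_sylvRow_of_le :
    ∑ r, (sylvMat A B d (n + 1) 0).adjugate (sylvMid n) r *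
      (sylvRow A B (n + 1) r).coeff (n + ℓ) = (sylvMat A B d (n + 1) ℓ).det := by
  rw [sum_adjugate_mul_coeff_sylvRow]
  congr 1
  ext r c
  rcases eq_or_ne c (sylvMid n) with rfl | hc
  · rw [Matrix.updateCol_self, sylvMat_apply, sylvColDegree_mid]
  · have hcn : (c : ℕ) ≠ n := fun h ↦ hc (Fin.ext h)
    simp [Matrix.updateCol_ne hc, sylvMat_apply, sylvColDegree, hcn]

lemma sum_adjugate_mul_coeff_sylvRow_of_lt {e : ℕ} (he : e < n) :
    ∑ r, (sylvMat A B d (n + 1) 0).adjugate (sylvMid n) r *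
      (sylvRow A B (n + 1) r).coeff e = 0 := by
  let c : Fin (2 * (n + 1)) := ⟨e, by omega⟩
  have hc : c ≠ sylvMid n := Fin.ne_of_val_ne he.ne
  rw [sum_adjugate_mul_coeff_sylvRow]
  refine Matrix.det_zero_of_column_eq hc fun r ↦ ?_
  rw [Matrix.updateCol_self, Matrix.updateCol_ne hc, sylvMat_apply, sylvColDegree_of_lt he]

lemma det_sylvMat_eq_zero (hA : A.natDegree ≤ d) (hB : B.natDegree ≤ d) (hℓ : d ≤ n + ℓ) :
    (sylvMat A B d (n + 1) ℓ).det = 0 := by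
  rcases le_or_gt ℓ d with hℓd | hℓd
  · let c : Fin (2 * (n + 1)) := ⟨n + 1 + (n + ℓ - d), by omega⟩
    refine Matrix.det_zero_of_column_eq (i := sylvMid n) (j := c)
      (Fin.ne_of_val_ne (by simp only [sylvMid, c]; omega)) fun r ↦ ?_
    rw [sylvMat_apply, sylvMat_apply, sylvColDegree_mid,
      sylvColDegree_of_gt (by simp only [c]; omega)]
    congr 1
    simp only [c]
    omega
  · refine Matrix.det_eq_zero_of_column_eq_zero (sylvMid n) fun r ↦ ?_
    rw [sylvMat_apply, sylvColDegree_mid]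
    exact coeff_eq_zero_of_natDegree_lt ((natDegree_sylvRow_le hA hB r.2).trans_lt (by omega))

lemma coeff_symSubres_succ (hA : A.natDegree ≤ d) (hB : B.natDegree ≤ d) (ℓ : ℕ) :
    (symSubres A B d (n + 1)).coeff ℓ = (sylvMat A B d (n + 1) ℓ).det := by
  simp only [symSubres, Nat.succ_ne_zero, if_false, finsetSum_coeff, coeff_C_mul_X_pow,
    Finset.sum_ite_eq, Finset.mem_range]
  split_ifs with hℓ
  · rfl
  · exact (det_sylvMat_eq_zero hA hB (by omega)).symm

theorem exists_bezout_symSubres (hA : A.natDegree ≤ d) (hB : B.natDegree ≤ d) (n : ℕ) :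
    ∃ U V : R[X], U.natDegree ≤ n ∧ V.natDegree ≤ n ∧
      V.coeff n = -(A.coeff d * principalCoeff A B d n) ∧
      U * A + V * B = X ^ n * symSubres A B d (n + 1) := by
  obtain ⟨U, V, hU, hV, hc⟩ :=
    exists_sylvCoord_eq ((sylvMat A B d (n + 1) 0).adjugate (sylvMid n))
  refine ⟨U, V, hU, hV, ?_, ?_⟩
  · rw [← adjugate_sylvMat_mid_last hA hB (ℓ := 0)]
    exact (sylvCoord_last U V n).symm.trans (hc (sylvLast n))
  · rw [← sum_C_sylvCoord_mul_sylvRow (Nat.lt_succ_of_le hU) (Nat.lt_succ_of_le hV)]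
    ext e
    simp only [finsetSum_coeff, coeff_C_mul, hc, coeff_X_pow_mul']
    split_ifs with he
    · obtain ⟨ℓ, rfl⟩ := Nat.exists_eq_add_of_le he
      rw [sum_adjugate_mul_coeff_sylvRow_of_le, Nat.add_sub_cancel_left,
        coeff_symSubres_succ hA hB]
    · exact sum_adjugate_mul_coeff_sylvRow_of_lt (not_le.1 he)

open Matrix in
theorem C_coeff_mul_symSubres_of_mul_add_mul_eq (hA : A.natDegree ≤ d) (hB : B.natDegree ≤ d)
    (hU : U.natDegree ≤ n) (hV : V.natDegree ≤ n) (hS : S.natDegree + n < d)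
    (h : U * A + V * B = X ^ n * S) :
    C (V.coeff n) * symSubres A B d (n + 1) = C (-(A.coeff d * principalCoeff A B d n)) * S := by
  ext ℓ
  have hcoord : (fun r : Fin (2 * (n + 1)) ↦ sylvCoord U V (n + 1) r) ᵥ* sylvMat A B d (n + 1) ℓ =
      Pi.single (sylvMid n) (S.coeff ℓ) := by
    ext c
    rw [sylvCoord_vecMul_sylvMat (Nat.lt_succ_of_le hU) (Nat.lt_succ_of_le hV), h,
      coeff_X_pow_mul']
    rcases lt_trichotomy (c : ℕ) n with hc | hc | hc
    · rw [sylvColDegree_of_lt hc, if_neg hc.not_ge, Pi.single_eq_of_ne (Fin.ne_of_val_ne hc.ne)]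
    · obtain rfl : c = sylvMid n := Fin.ext hc
      rw [sylvColDegree_mid, if_pos (by omega), Nat.add_sub_cancel_left, Pi.single_eq_same]
    · rw [sylvColDegree_of_gt hc, if_pos (by omega), Pi.single_eq_of_ne (Fin.ne_of_val_ne hc.ne')]
      exact coeff_eq_zero_of_natDegree_lt (by omega)
  have hlast := mul_det_eq_mul_adjugate_of_vecMul_eq_single hcoord (sylvLast n)
  rw [sylvCoord_last, adjugate_sylvMat_mid_last hA hB] at hlast
  rw [coeff_C_mul, coeff_C_mul, coeff_symSubres_succ hA hB, hlast, mul_comm]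

theorem C_principalCoeff_mul_symSubres (hA : A.natDegree ≤ d) (hB : B.natDegree ≤ d)
    (ha : IsLeftRegular (A.coeff d)) (hS : (symSubres A B d (j + 1)).natDegree + j + k < d) :
    C (principalCoeff A B d j) * symSubres A B d (j + k + 1) =
      C (principalCoeff A B d (j + k)) * symSubres A B d (j + 1) := by
  obtain ⟨U, V, hU, hV, hcoeff, h⟩ := exists_bezout_symSubres hA hB j
  have hshift : U * X ^ k * A + V * X ^ k * B = X ^ (j + k) * symSubres A B d (j + 1) := by
    linear_combination X ^ k * h
  have hprop := C_coeff_mul_symSubres_of_mul_add_mul_eq hA hB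
    (natDegree_mul_le_of_le hU (natDegree_X_pow_le k))
    (natDegree_mul_le_of_le hV (natDegree_X_pow_le k)) (by omega) hshift
  rw [coeff_mul_X_pow, hcoeff] at hprop
  ext e
  have hprop_e := congrArg (coeff · e) hprop
  simp only [coeff_C_mul] at hprop_e ⊢
  exact ha (by linear_combination -hprop_e)

lemma coeff_zero_symSubres_succ :
    (symSubres A B d (n + 1)).coeff 0 = principalCoeff A B d (n + 1) := by
  simp [symSubres, principalCoeff]

theorem C_principalCoeff_pow_mul_symSubres (hA : A.natDegree ≤ d) (hB : B.natDegree ≤ d)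
    (ha : IsLeftRegular (A.coeff d)) (hS : (symSubres A B d (j + 1)).natDegree + j + k < d) :
    C (principalCoeff A B d j ^ k) * symSubres A B d (j + k + 1) =
      C (principalCoeff A B d (j + 1) ^ k) * symSubres A B d (j + 1) := by
  induction k with
  | zero => simp
  | succ k ih =>
    have ih := ih (by omega)
    have ih₀ := congrArg (fun p ↦ C (p.coeff 0)) ih
    have hsucc := C_principalCoeff_mul_symSubres hA hB ha hS
    simp only [coeff_C_mul, coeff_zero_symSubres_succ, C_mul] at ih₀
    simp only [C_pow, ← add_assoc] at ih₀ hsucc ⊢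
    linear_combination C (principalCoeff A B d j) ^ k * hsucc + symSubres A B d (j + 1) * ih₀

theorem structure_theorem_right_defective_general (A B : R[X]) (d j k : ℕ)
    (hA : A.natDegree ≤ d) (hB : B.natDegree ≤ d) (ha : IsLeftRegular (A.coeff d)) (hk : 1 ≤ k)
    (hdeg : (symSubres A B d (j + 1)).natDegree + j + k ≤ d) :
    (0 < j →
      C ((symSubres A B d j).coeff 0 ^ (k - 1)) * symSubres A B d (j + k) =
        C ((symSubres A B d (j + 1)).coeff 0 ^ (k - 1)) * symSubres A B d (j + 1)) ∧
    (j = 0 →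
      symSubres A B d k = C ((symSubres A B d 1).coeff 0 ^ (k - 1)) * symSubres A B d 1) := by
  obtain ⟨k, rfl⟩ := Nat.exists_eq_add_of_le' hk
  have hpow := C_principalCoeff_pow_mul_symSubres hA hB ha (j := j) (k := k) (by omega)
  rw [← coeff_zero_symSubres_succ] at hpow
  constructor
  · intro hj
    obtain ⟨j, rfl⟩ := Nat.exists_eq_add_of_le' hj
    rwa [← coeff_zero_symSubres_succ] at hpow
  · rintro rfl
    simpa [principalCoeff_zero] using hpow

end SymmetricSubresultants

/-- Structure theorem, part 1, case `α = 0`, `β > 1`: if `(S_j, S_{j+1})` is `(0,β)`-defective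
with `β > 1`, then for `k = 2, …, β-1` one has
`S_j(0)^{k-1} · S_{j+k} = S_{j+1}(0)^{k-1} · S_{j+1}` when `j > 0`, and
`S_k = S_1(0)^{k-1} · S_1` when `j = 0`. -/
theorem structure_theorem_right_defective (D : Subring ℂ) (A B : Polynomial D) (d j β : ℕ)
    (hAdeg : A.degree = (d : ℕ)) (hBdeg : B.degree = (d : ℕ))
    (hAval : A.coeff 0 ≠ 0) (hBval : B.coeff 0 ≠ 0)
    (hdef : IsDefective A B d j 0 β) (hβ : 1 < β) :
    ∀ k, 2 ≤ k → k ≤ β - 1 →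
      (0 < j →
        C (((symSubres A B d j).coeff 0) ^ (k - 1)) * symSubres A B d (j + k) =
          C (((symSubres A B d (j + 1)).coeff 0) ^ (k - 1)) * symSubres A B d (j + 1)) ∧
      (j = 0 →
        symSubres A B d k =
          C (((symSubres A B d 1).coeff 0) ^ (k - 1)) * symSubres A B d 1) := by
  obtain ⟨-, -, -, -, hdeg⟩ := hdef
  intro k hk hkβ
  exact structure_theorem_right_defective_general A B d j k (natDegree_le_of_degree_le hAdeg.le)
    (natDegree_le_of_degree_le hBdeg.le)
    (IsRegular.of_ne_zero (coeff_ne_zero_of_eq_degree hAdeg)).left (by omega) (by omega)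
end

section
/- Let A, B ∈ D[X] have the same degree d and valuation 0, let (S_i)_{−1 ≤ i ≤ d} be their sequence of symmetric subresultants, let j ∈ {1, …, d−1} be such that (S_j, S_{j+1}) is (α,β)-defective, and put k = j+α+β. Then the symmetric quotient of lc(S_{j+1})·S_k(0)·S_j by S_{j+1} belongs to D[X], and so does the symmetric remainder. -/
open Polynomial

/-!
The Laplace expansion of the minors of the Sylvester matrix along their varying column yields Bézout
relations `U_j A + V_j B = X^(j-1) S_j` in which, for `j ≥ 1`, `U_j` and `V_j` have degree less than
`j` and the coefficient of `V_{k+1}` of degree `k` is `-lc(A) S_k(0)` for `k ≥ 1`. Eliminating `A`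
and `B` from three of these relations gives

  `Δ_{j+1,k+1} X^(j-1) S_j = Δ_{j,k+1} X^j S_{j+1} - Δ_{j,j+1} X^k S_{k+1}`,

where `Δ_{m,n} = U_m V_n - U_n V_m`. Since `A(0) ≠ 0`, comparing valuations and degrees in
`Δ_{m,n} A = X^(m-1) S_m V_n - X^(n-1) S_n V_m` shows that `Δ_{j,j+1}` is a constant times
`X^(j-1)` and that `Δ_{j+1,k+1} = -lc(S_{j+1}) S_k(0) X^(j+α)`. After cancelling powers of `X` this
is the required division, and all the polynomials in it have coefficients in the base ring.
-/

theorem val_succAbove_eq_ite {N : ℕ} (p : Fin (N + 1)) (i : Fin N) :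
    (p.succAbove i : ℕ) = if (i : ℕ) < p then (i : ℕ) else i + 1 := by
  simp only [Fin.succAbove, Fin.lt_def, Fin.val_castSucc]
  split_ifs <;> simp

theorem exists_eq_X_pow_natTrailingDegree_mul {R : Type*} [Semiring R] {p : R[X]} (hp : p ≠ 0) :
    ∃ q : R[X], p = X ^ p.natTrailingDegree * q ∧ q.coeff 0 ≠ 0 := by
  obtain ⟨q, hq⟩ : X ^ p.natTrailingDegree ∣ p :=
    X_pow_dvd_iff.2 fun _ => coeff_eq_zero_of_lt_natTrailingDegree
  refine ⟨q, hq, ?_⟩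
  have htc : p.coeff p.natTrailingDegree = q.coeff 0 := by
    rw [← coeff_X_pow_mul q p.natTrailingDegree 0, ← hq, zero_add]
  exact htc ▸ mt trailingCoeff_eq_zero.1 hp

section SymmetricDivision

variable {R : Type*} [CommRing R] [IsDomain R]

theorem eq_C_mul_X_pow_of_dvd_mul {p q : R[X]} {n : ℕ} (hq : q.coeff 0 ≠ 0)
    (hdvd : X ^ n ∣ p * q) (hdeg : (p * q).natDegree ≤ n + q.natDegree) :
    p = C (p.coeff n) * X ^ n := by
  obtain ⟨w, rfl⟩ := prime_X.pow_dvd_of_dvd_mul_right n (mt X_dvd_iff.1 hq) hdvd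
  rcases eq_or_ne w 0 with rfl | hw
  · simp
  have hq0 : q ≠ 0 := by rintro rfl; simp at hq
  have hwdeg : w.natDegree = 0 := by
    rw [natDegree_mul (mul_ne_zero (pow_ne_zero _ X_ne_zero) hw) hq0,
      natDegree_X_pow_mul n hw] at hdeg
    lia
  obtain ⟨c, rfl⟩ := natDegree_eq_zero.1 hwdeg
  rw [mul_comm (X ^ n), coeff_C_mul, coeff_X_pow_self, mul_one]

theorem exists_eq_mul_add_of_X_pow_mul_eq {p f h g : R[X]} {n : ℕ} (hp : p.coeff 0 ≠ 0)
    (heq : X ^ n * f = g * p + X ^ n * h) : ∃ q, f = q * p + h := by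
  have hdvd : X ^ n ∣ g * p := ⟨f - h, by linear_combination -heq⟩
  obtain ⟨q, rfl⟩ := prime_X.pow_dvd_of_dvd_mul_right n (mt X_dvd_iff.1 hp) hdvd
  exact ⟨q, mul_left_cancel₀ (pow_ne_zero n X_ne_zero) (by linear_combination heq)⟩

theorem symmetric_division_unique {p q q' r r' : R[X]} {n : ℕ} (hp : p.coeff 0 ≠ 0)
    (hr : r.degree < p.degree) (hr' : r'.degree < p.degree)
    (heq : q * p + X ^ n * r = q' * p + X ^ n * r') : q = q' ∧ r = r' := by
  have hp0 : p ≠ 0 := by rintro rfl; simp at hp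
  obtain ⟨w, hw⟩ : ∃ w, r - r' = w * p + 0 :=
    exists_eq_mul_add_of_X_pow_mul_eq (n := n) (g := q' - q) hp (by linear_combination heq)
  have hrr : r - r' = 0 :=
    eq_zero_of_dvd_of_degree_lt ⟨w, by linear_combination hw⟩
      ((degree_sub_le r r').trans_lt (max_lt hr hr'))
  exact ⟨mul_right_cancel₀ hp0 (by linear_combination heq - X ^ n * hrr), sub_eq_zero.1 hrr⟩

end SymmetricDivision

namespace symSubres

variable {R : Type*} [CommRing R]

/-- The polynomial whose coefficients form row `r` of the Sylvester-type matrices `sylvMat A B d j`,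
that is, row `r` of the list `A, XA, …, X^(j-1)A, B, …, X^(j-1)B`. -/
noncomputable def rowPoly (A B : R[X]) (j r : ℕ) : R[X] :=
  if r < j then X ^ r * A else X ^ (r - j) * B

/-- The column of `sylvMat A B d (n + 1) ℓ` whose degree `n + ℓ` depends on `ℓ`. -/
def varCol (n : ℕ) : Fin (2 * (n + 1)) := ⟨n, by lia⟩

/-- The minor of size `2 (n + 1)` of the Sylvester-type matrix whose varying column has degree `m`.
Unlike in `sylvMat`, where `m = n + ℓ`, the degree `m` is arbitrary. -/
noncomputable def sylvMinor (A B : R[X]) (d n m : ℕ) : R :=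
  ((sylvMat A B d (n + 1) 0).updateCol (varCol n) fun r => (rowPoly A B (n + 1) r).coeff m).det

/-- The cofactor of the entry in row `r` of the varying column of the matrices
`sylvMat A B d (n + 1) ℓ`; it does not depend on `ℓ`. -/
noncomputable def sylvCofactor (A B : R[X]) (d n : ℕ) (r : Fin (2 * (n + 1))) : R :=
  (sylvMat A B d (n + 1) 0).adjugate (varCol n) r

/-- The coefficient `U_j` of `A` in the Bézout relation `U_j A + V_j B = X^(j-1) S_j`, obtained by
expanding the minors defining `S_j` along their varying column; for `j = 0` the relation is taken to
be `0 * A + 1 * B = S_0`, in accordance with truncated subtraction. -/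
noncomputable def leftCofactor (A B : R[X]) (d : ℕ) : ℕ → R[X]
  | 0 => 0
  | n + 1 => ∑ r : Fin (2 * (n + 1)),
      if (r : ℕ) < n + 1 then C (sylvCofactor A B d n r) * X ^ (r : ℕ) else 0

/-- The coefficient `V_j` of `B` in the Bézout relation `U_j A + V_j B = X^(j-1) S_j`, see
`symSubres.leftCofactor`. -/
noncomputable def rightCofactor (A B : R[X]) (d : ℕ) : ℕ → R[X]
  | 0 => 1
  | n + 1 => ∑ r : Fin (2 * (n + 1)),
      if (r : ℕ) < n + 1 then 0 else C (sylvCofactor A B d n r) * X ^ ((r : ℕ) - (n + 1))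

/-- The determinant `Δ_{m,n} = U_m V_n - U_n V_m` of the cofactors of `S_m` and `S_n`. -/
noncomputable def cofactorDet (A B : R[X]) (d m n : ℕ) : R[X] :=
  leftCofactor A B d m * rightCofactor A B d n - leftCofactor A B d n * rightCofactor A B d m

/-- The matrix obtained from `sylvMat A B d (n + 1) ℓ` by deleting the last row and the varying
column. -/
noncomputable def truncatedSylvMat (A B : R[X]) (d n : ℕ) :
    Matrix (Fin (2 * n + 1)) (Fin (2 * n + 1)) R := fun r c =>
  (rowPoly A B (n + 1) r).coeff (if (c : ℕ) < n then c else d + (c - n))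

variable {A B : R[X]} {d : ℕ}

theorem natDegree_rowPoly_le (hA : A.natDegree ≤ d) (hB : B.natDegree ≤ d) (j r : ℕ) :
    (rowPoly A B j r).natDegree ≤ (if r < j then r else r - j) + d := by
  unfold rowPoly
  split_ifs
  · exact natDegree_mul_le_of_le (natDegree_X_pow_le r) hA
  · exact natDegree_mul_le_of_le (natDegree_X_pow_le (r - j)) hB

theorem coeff_rowPoly_eq_zero (hA : A.natDegree ≤ d) (hB : B.natDegree ≤ d) {j r m : ℕ}
    (hm : (if r < j then r else r - j) + d < m) : (rowPoly A B j r).coeff m = 0 :=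
  coeff_eq_zero_of_natDegree_lt ((natDegree_rowPoly_le hA hB j r).trans_lt hm)

theorem det_sylvMat_succ (A B : R[X]) (d n ℓ : ℕ) :
    (sylvMat A B d (n + 1) ℓ).det = sylvMinor A B d n (n + ℓ) := by
  unfold sylvMinor
  congr 1
  ext r c
  rw [Matrix.updateCol_apply]
  split_ifs with hc
  · simp [sylvMat, rowPoly, hc, varCol]
  · have hcn : (c : ℕ) ≠ n := fun h => hc (Fin.ext h)
    simp [sylvMat, hcn]

theorem sylvMat_succ_apply_of_lt {n m : ℕ} (A B : R[X]) (d : ℕ) (r : Fin (2 * (n + 1)))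
    (hm : m < n) :
    sylvMat A B d (n + 1) 0 r ⟨m, by lia⟩ = (rowPoly A B (n + 1) r).coeff m := by
  simp [sylvMat, rowPoly, hm]

theorem sylvMat_succ_apply_add {n i : ℕ} (A B : R[X]) (d : ℕ) (r : Fin (2 * (n + 1)))
    (hi : i ≤ n) :
    sylvMat A B d (n + 1) 0 r ⟨n + 1 + i, by lia⟩ = (rowPoly A B (n + 1) r).coeff (d + i) := by
  simp [sylvMat, rowPoly, show ¬ n + 1 + i < n by lia, show n + 1 + i ≠ n by lia]

theorem sylvMinor_eq_zero_of_column_eq {n m : ℕ} {c : Fin (2 * (n + 1))} (hc : (c : ℕ) ≠ n)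
    (heq : ∀ r, sylvMat A B d (n + 1) 0 r c = (rowPoly A B (n + 1) r).coeff m) :
    sylvMinor A B d n m = 0 := by
  have hne : c ≠ varCol n := fun h => hc (congrArg Fin.val h)
  refine Matrix.det_zero_of_column_eq hne fun r => ?_
  rw [Matrix.updateCol_self, Matrix.updateCol_ne hne, heq]

theorem sylvMinor_eq_zero_of_lt (A B : R[X]) (d : ℕ) {n m : ℕ} (hm : m < n) :
    sylvMinor A B d n m = 0 :=
  sylvMinor_eq_zero_of_column_eq hm.ne fun r => sylvMat_succ_apply_of_lt A B d r hm

theorem sylvMinor_eq_zero_of_le (hA : A.natDegree ≤ d) (hB : B.natDegree ≤ d) {n m : ℕ}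
    (hm : d ≤ m) : sylvMinor A B d n m = 0 := by
  obtain ⟨i, rfl⟩ := Nat.exists_eq_add_of_le hm
  rcases le_or_gt i n with hi | hi
  · exact sylvMinor_eq_zero_of_column_eq (by simp; lia)
      fun r => sylvMat_succ_apply_add A B d r hi
  · refine Matrix.det_eq_zero_of_column_eq_zero (varCol n) fun r => ?_
    rw [Matrix.updateCol_self]
    exact coeff_rowPoly_eq_zero hA hB (by split_ifs <;> lia)

theorem symSubres_succ (A B : R[X]) (d n : ℕ) :
    symSubres A B d (n + 1) =
      ∑ ℓ ∈ Finset.range (d - (n + 1) + 1), C (sylvMinor A B d n (n + ℓ)) * X ^ ℓ := by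
  simp [symSubres, det_sylvMat_succ]

theorem coeff_symSubres_succ (hA : A.natDegree ≤ d) (hB : B.natDegree ≤ d) (n ℓ : ℕ) :
    (symSubres A B d (n + 1)).coeff ℓ = sylvMinor A B d n (n + ℓ) := by
  simp only [symSubres_succ, finsetSum_coeff, coeff_C_mul_X_pow, Finset.sum_ite_eq]
  split_ifs with hℓ
  · rfl
  · rw [sylvMinor_eq_zero_of_le hA hB (by simp at hℓ; lia)]

theorem degree_succ_lt (hA : A.natDegree ≤ d) (hB : B.natDegree ≤ d) (n : ℕ) :
    (symSubres A B d (n + 1)).degree < (d - n : ℕ) := by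
  refine (degree_lt_iff_coeff_zero _ _).2 fun ℓ hℓ => ?_
  rw [coeff_symSubres_succ hA hB, sylvMinor_eq_zero_of_le hA hB (by lia)]

theorem natDegree_le (hB : B.natDegree ≤ d) (j : ℕ) :
    (symSubres A B d j).natDegree ≤ d - j := by
  cases j with
  | zero => simpa [symSubres] using hB
  | succ n =>
    rw [symSubres_succ]
    refine natDegree_sum_le_of_forall_le _ _ fun ℓ hℓ => (natDegree_C_mul_X_pow_le _ _).trans ?_
    exact Nat.lt_succ_iff.1 (Finset.mem_range.1 hℓ)

theorem coeff_zero {n : ℕ} (hn : n ≠ 0) :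
    (symSubres A B d n).coeff 0 = (sylvMat A B d n 0).det := by
  simp [symSubres, hn, finsetSum_coeff, coeff_X_pow]

theorem sylvMinor_eq_sum (A B : R[X]) (d n m : ℕ) :
    sylvMinor A B d n m =
      ∑ r : Fin (2 * (n + 1)), sylvCofactor A B d n r * (rowPoly A B (n + 1) r).coeff m := by
  rw [sylvMinor, ← Matrix.cramer_apply, Matrix.cramer_eq_adjugate_mulVec]
  rfl

theorem cofactor_combination_eq_sum (A B : R[X]) (d n : ℕ) :
    leftCofactor A B d (n + 1) * A + rightCofactor A B d (n + 1) * B =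
      ∑ r : Fin (2 * (n + 1)), C (sylvCofactor A B d n r) * rowPoly A B (n + 1) r := by
  simp only [leftCofactor, rightCofactor, rowPoly, Finset.sum_mul, ← Finset.sum_add_distrib]
  refine Finset.sum_congr rfl fun r _ => ?_
  split_ifs <;> ring

theorem bezout (hA : A.natDegree ≤ d) (hB : B.natDegree ≤ d) (j : ℕ) :
    leftCofactor A B d j * A + rightCofactor A B d j * B = X ^ (j - 1) * symSubres A B d j := by
  cases j with
  | zero => simp [leftCofactor, rightCofactor, symSubres]
  | succ n =>
    ext m
    rw [cofactor_combination_eq_sum, finsetSum_coeff, Nat.add_sub_cancel, coeff_X_pow_mul']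
    simp only [coeff_C_mul, ← sylvMinor_eq_sum, coeff_symSubres_succ hA hB]
    split_ifs with hm
    · rw [Nat.add_sub_cancel' hm]
    · exact sylvMinor_eq_zero_of_lt A B d (not_le.1 hm)

theorem natDegree_rightCofactor_le (A B : R[X]) (d j : ℕ) :
    (rightCofactor A B d j).natDegree ≤ j - 1 := by
  cases j with
  | zero => simp [rightCofactor]
  | succ n =>
    refine natDegree_sum_le_of_forall_le _ _ fun r _ => ?_
    split_ifs
    · simp
    · exact (natDegree_C_mul_X_pow_le _ _).trans (by lia)

theorem coeff_rightCofactor_succ (A B : R[X]) (d n : ℕ) :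
    (rightCofactor A B d (n + 1)).coeff n = sylvCofactor A B d n ⟨2 * n + 1, by lia⟩ := by
  rw [rightCofactor, finsetSum_coeff, Fintype.sum_eq_single ⟨2 * n + 1, by lia⟩]
  · simp [coeff_X_pow, show ¬ 2 * n + 1 < n + 1 by lia, show 2 * n + 1 - (n + 1) = n by lia]
  · intro r hr
    have hr' : (r : ℕ) ≠ 2 * n + 1 := fun h => hr (Fin.ext h)
    split_ifs
    · simp
    · rw [coeff_C_mul_X_pow, if_neg (by lia)]

theorem sylvCofactor_last (A B : R[X]) (d n : ℕ) :
    sylvCofactor A B d n ⟨2 * n + 1, by lia⟩ =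
      (-1) ^ (2 * n + 1 + n) * (truncatedSylvMat A B d n).det := by
  refine (Matrix.adjugate_fin_succ_eq_det_submatrix (n := 2 * n + 1) _ _
    (Fin.last (2 * n + 1))).trans ?_
  congr 2
  ext r c
  have hc : ((varCol n).succAbove (n := 2 * n + 1) c : ℕ) =
      if (c : ℕ) < n then (c : ℕ) else c + 1 :=
    val_succAbove_eq_ite _ _
  simp only [Matrix.submatrix_apply, sylvMat, truncatedSylvMat, rowPoly, Fin.succAbove_last,
    Fin.val_castSucc]
  congr 1
  split_ifs <;> lia

theorem truncatedSylvMat_submatrix (A B : R[X]) (d n : ℕ) :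
    (truncatedSylvMat A B d n).submatrix (Fin.succAbove ⟨n, by lia⟩)
      (Fin.last (2 * n)).succAbove = sylvMat A B d n 0 := by
  ext r c
  simp only [Matrix.submatrix_apply, sylvMat, truncatedSylvMat, rowPoly, val_succAbove_eq_ite,
    Fin.succAbove_last, Fin.val_castSucc]
  congr 1 <;> split_ifs <;> grind

theorem truncatedSylvMat_apply_last (A B : R[X]) (d n : ℕ) (r : Fin (2 * n + 1)) :
    truncatedSylvMat A B d n r (Fin.last (2 * n)) = (rowPoly A B (n + 1) r).coeff (d + n) := by
  simp [truncatedSylvMat, show ¬ 2 * n < n by lia, show 2 * n - n = n by lia]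

theorem det_truncatedSylvMat (hA : A.natDegree ≤ d) (hB : B.natDegree ≤ d) (n : ℕ) :
    (truncatedSylvMat A B d n).det =
      (-1) ^ (n + 2 * n) * (A.coeff d * (sylvMat A B d n 0).det) := by
  rw [Matrix.det_succ_column _ (Fin.last (2 * n)), Fintype.sum_eq_single ⟨n, by lia⟩]
  · rw [truncatedSylvMat_submatrix, truncatedSylvMat_apply_last]
    simp [rowPoly, coeff_X_pow_mul, mul_assoc]
  · intro r hr
    have hr' : (r : ℕ) ≠ n := fun h => hr (Fin.ext h)
    rw [truncatedSylvMat_apply_last, coeff_rowPoly_eq_zero hA hB (by split_ifs <;> lia)]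
    ring

theorem coeff_rightCofactor_succ_eq (hA : A.natDegree ≤ d) (hB : B.natDegree ≤ d) {n : ℕ}
    (hn : n ≠ 0) :
    (rightCofactor A B d (n + 1)).coeff n = -(A.coeff d * (symSubres A B d n).coeff 0) := by
  have hsign : (-1 : R) ^ (2 * n + 1 + n) * (-1) ^ (n + 2 * n) = -1 := by
    rw [← pow_add]
    exact Odd.neg_one_pow ⟨3 * n, by ring⟩
  rw [coeff_rightCofactor_succ, sylvCofactor_last, det_truncatedSylvMat hA hB, coeff_zero hn,
    ← mul_assoc, hsign, neg_one_mul]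

theorem cofactorDet_mul_left (hA : A.natDegree ≤ d) (hB : B.natDegree ≤ d) (m n : ℕ) :
    cofactorDet A B d m n * A =
      X ^ (m - 1) * symSubres A B d m * rightCofactor A B d n -
        X ^ (n - 1) * symSubres A B d n * rightCofactor A B d m := by
  rw [cofactorDet, ← bezout hA hB m, ← bezout hA hB n]
  ring

theorem cofactorDet_elimination (hA : A.natDegree ≤ d) (hB : B.natDegree ≤ d) (i m n : ℕ) :
    cofactorDet A B d m n * (X ^ (i - 1) * symSubres A B d i) =
      cofactorDet A B d i n * (X ^ (m - 1) * symSubres A B d m) -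
        cofactorDet A B d i m * (X ^ (n - 1) * symSubres A B d n) := by
  simp only [cofactorDet, ← bezout hA hB]
  ring

theorem natDegree_X_pow_mul_symSubres_mul_rightCofactor_le (A B : R[X]) (d i m n : ℕ) :
    (X ^ i * symSubres A B d m * rightCofactor A B d n).natDegree ≤
      i + (symSubres A B d m).natDegree + (n - 1) :=
  natDegree_mul_le_of_le (natDegree_mul_le_of_le (natDegree_X_pow_le i) le_rfl)
    (natDegree_rightCofactor_le A B d n)

theorem coeff_X_pow_mul_symSubres_mul_rightCofactor_eq_zero (hA : A.natDegree ≤ d)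
    (hB : B.natDegree ≤ d) {k j m : ℕ} (hm : d + j ≤ m) :
    (X ^ k * symSubres A B d (k + 1) * rightCofactor A B d (j + 1)).coeff m = 0 := by
  rcases eq_or_ne (symSubres A B d (k + 1)) 0 with h | h
  · simp [h]
  have hdeg := (natDegree_lt_iff_degree_lt h).2 (degree_succ_lt hA hB k)
  refine coeff_eq_zero_of_natDegree_lt
    ((natDegree_X_pow_mul_symSubres_mul_rightCofactor_le A B d k _ _).trans_lt ?_)
  lia

variable [IsDomain R]

theorem cofactorDet_eq_C_mul_X_pow (hA : A.natDegree = d) (hA0 : A.coeff 0 ≠ 0)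
    (hB : B.natDegree ≤ d) {m n p : ℕ} (hm : X ^ p ∣ X ^ (m - 1) * symSubres A B d m)
    (hn : X ^ p ∣ X ^ (n - 1) * symSubres A B d n)
    (hmdeg : m - 1 + (symSubres A B d m).natDegree + (n - 1) ≤ p + d)
    (hndeg : n - 1 + (symSubres A B d n).natDegree + (m - 1) ≤ p + d) :
    cofactorDet A B d m n = C ((cofactorDet A B d m n).coeff p) * X ^ p := by
  refine eq_C_mul_X_pow_of_dvd_mul hA0 ?_ ?_ <;> rw [cofactorDet_mul_left hA.le hB]
  · exact dvd_sub (hm.mul_right _) (hn.mul_right _)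
  · rw [hA]
    exact (natDegree_sub_le_of_le
      (natDegree_X_pow_mul_symSubres_mul_rightCofactor_le A B d _ m n)
      (natDegree_X_pow_mul_symSubres_mul_rightCofactor_le A B d _ n m)).trans
      (max_le hmdeg hndeg)

theorem cofactorDet_succ_eq (hA : A.natDegree = d) (hA0 : A.coeff 0 ≠ 0) (hB : B.natDegree ≤ d)
    {j : ℕ} (hj : j ≤ d) :
    ∃ c : R, cofactorDet A B d j (j + 1) = C c * X ^ (j - 1) := by
  have hdeg := natDegree_le (A := A) hB j
  have hdeg' := natDegree_le (A := A) hB (j + 1)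
  exact ⟨_, cofactorDet_eq_C_mul_X_pow hA hA0 hB (dvd_mul_right _ _)
    ((pow_dvd_pow X (by lia)).mul_right _) (by lia) (by lia)⟩

variable {P : R[X]} {j α β : ℕ}

theorem cofactorDet_defective_eq (hA : A.natDegree = d) (hA0 : A.coeff 0 ≠ 0)
    (hB : B.natDegree ≤ d) (hP : symSubres A B d (j + 1) = X ^ α * P)
    (hdeg : P.natDegree + (j + α + β) = d) (hβ : β ≠ 0) :
    cofactorDet A B d (j + 1) (j + α + β + 1) =
      C (-(P.leadingCoeff * (symSubres A B d (j + α + β)).coeff 0)) * X ^ (j + α) := by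
  set k := j + α + β
  set Δ := cofactorDet A B d (j + 1) (k + 1)
  have hmul : Δ * A = X ^ (j + α) * P * rightCofactor A B d (k + 1) -
      X ^ k * symSubres A B d (k + 1) * rightCofactor A B d (j + 1) := by
    rw [cofactorDet_mul_left hA.le hB, hP, Nat.add_sub_cancel, Nat.add_sub_cancel]
    ring
  have hmono : Δ = C (Δ.coeff (j + α)) * X ^ (j + α) := by
    have hPdeg : (X ^ α * P).natDegree ≤ α + P.natDegree :=
      natDegree_mul_le_of_le (natDegree_X_pow_le α) le_rfl
    have hkdeg := natDegree_le (A := A) hB (k + 1)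
    refine cofactorDet_eq_C_mul_X_pow hA hA0 hB ?_ ((pow_dvd_pow X (by lia)).mul_right _)
      (by rw [hP]; lia) (by lia)
    exact ⟨P, by rw [hP, Nat.add_sub_cancel, pow_add, mul_assoc]⟩
  have hcoeff : Δ.coeff (j + α) * A.coeff d =
      P.leadingCoeff * (rightCofactor A B d (k + 1)).coeff k := by
    calc Δ.coeff (j + α) * A.coeff d
        = (Δ * A).coeff (d + (j + α)) := by
          conv_rhs => rw [hmono, mul_assoc, coeff_C_mul, coeff_X_pow_mul]
      _ = (P * rightCofactor A B d (k + 1)).coeff (P.natDegree + k) := by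
          rw [hmul, coeff_sub, coeff_X_pow_mul_symSubres_mul_rightCofactor_eq_zero hA.le hB
            (by lia), sub_zero, mul_assoc, coeff_X_pow_mul, hdeg]
      _ = P.leadingCoeff * (rightCofactor A B d (k + 1)).coeff k :=
          coeff_mul_add_eq_of_natDegree_le le_rfl (natDegree_rightCofactor_le A B d (k + 1))
  have hAd : A.coeff d ≠ 0 := by
    have hA_ne : A ≠ 0 := by rintro rfl; simp at hA0
    exact hA ▸ leadingCoeff_ne_zero.2 hA_ne
  have hconst : Δ.coeff (j + α) = -(P.leadingCoeff * (symSubres A B d k).coeff 0) := by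
    rw [coeff_rightCofactor_succ_eq hA.le hB (by lia)] at hcoeff
    exact mul_right_cancel₀ hAd (by linear_combination hcoeff)
  rw [hmono, hconst]

theorem exists_symmetric_division (hA : A.natDegree = d) (hA0 : A.coeff 0 ≠ 0)
    (hB : B.natDegree ≤ d) (hP : symSubres A B d (j + 1) = X ^ α * P) (hP0 : P.coeff 0 ≠ 0)
    (hdeg : P.natDegree + (j + α + β) = d) :
    ∃ Q T : R[X], T.degree < P.degree ∧
      C (P.leadingCoeff * (symSubres A B d (j + α + β)).coeff 0) * symSubres A B d j =
        Q * P + X ^ β * T := by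
  have hP_ne : P ≠ 0 := by rintro rfl; simp at hP0
  have hβ : β ≠ 0 := by
    have hlt := degree_succ_lt (A := A) hA.le hB j
    rw [hP, degree_eq_natDegree (mul_ne_zero (pow_ne_zero _ X_ne_zero) hP_ne),
      natDegree_X_pow_mul α hP_ne, Nat.cast_lt] at hlt
    lia
  obtain ⟨c, hc⟩ := cofactorDet_succ_eq hA hA0 hB (j := j) (by lia)
  have hΔ := cofactorDet_defective_eq hA hA0 hB hP hdeg hβ
  have helim := cofactorDet_elimination hA.le hB j (j + 1) (j + α + β + 1)
  rw [hc, hΔ, hP, Nat.add_sub_cancel, Nat.add_sub_cancel] at helim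
  set e := P.leadingCoeff * (symSubres A B d (j + α + β)).coeff 0
  obtain ⟨Q, hQ⟩ : ∃ Q, C e * symSubres A B d j =
      Q * P + X ^ β * (C c * symSubres A B d (j + α + β + 1)) := by
    refine exists_eq_mul_add_of_X_pow_mul_eq (n := j - 1)
      (g := -cofactorDet A B d j (j + α + β + 1)) hP0 ?_
    apply mul_left_cancel₀ (pow_ne_zero (j + α) (X_ne_zero (R := R)))
    rw [C_neg] at helim
    linear_combination -helim
  refine ⟨Q, _, ?_, hQ⟩
  have hlt := degree_succ_lt (A := A) hA.le hB (j + α + β)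
  rw [← smul_eq_C_mul, degree_eq_natDegree hP_ne, Nat.eq_sub_of_add_eq hdeg]
  exact (degree_smul_le _ _).trans_lt hlt

end symSubres

theorem symmetric_division_fraction_free_general {R K : Type*} [CommRing R] [CommRing K]
    [IsDomain K] {f : R →+* K} (hf : Function.Injective f) {A B : R[X]} {d j α β : ℕ}
    (hA : A.natDegree = d) (hA0 : A.coeff 0 ≠ 0) (hB : B.natDegree ≤ d)
    (hne : symSubres A B d (j + 1) ≠ 0)
    (hα : (symSubres A B d (j + 1)).natTrailingDegree = α)
    (hβ : (symSubres A B d (j + 1)).natDegree + β + j = d) {Q T : K[X]}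
    (hT : T.degree < (d - j - (α + β) : ℕ))
    (hdiv : (C ((symSubres A B d (j + 1)).leadingCoeff *
        (symSubres A B d (j + α + β)).coeff 0) * symSubres A B d j).map f =
      Q * ((symSubres A B d (j + 1)).map f /ₘ X ^ α) + X ^ β * T) :
    Q ∈ lifts f ∧ T ∈ lifts f := by
  have : IsDomain R := hf.isDomain f
  obtain ⟨P, hP, hP0⟩ := exists_eq_X_pow_natTrailingDegree_mul hne
  rw [hα] at hP
  have hP_ne : P ≠ 0 := by rintro rfl; simp at hP0
  have hdeg : P.natDegree + (j + α + β) = d := by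
    rw [hP, natDegree_X_pow_mul α hP_ne] at hβ
    lia
  obtain ⟨Q', T', hT', hdiv'⟩ := symSubres.exists_symmetric_division hA hA0 hB hP hP0 hdeg
  have hPmap : (symSubres A B d (j + 1)).map f /ₘ X ^ α = P.map f := by
    rw [hP, Polynomial.map_mul, Polynomial.map_pow, map_X,
      mul_divByMonic_cancel_left _ (monic_X_pow α)]
  have hlc : (symSubres A B d (j + 1)).leadingCoeff = P.leadingCoeff := by
    rw [hP, leadingCoeff_mul, leadingCoeff_X_pow, one_mul]
  rw [hPmap, hlc, hdiv', Polynomial.map_add, Polynomial.map_mul, Polynomial.map_mul,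
    Polynomial.map_pow, map_X] at hdiv
  have hPdeg : (P.map f).degree = (d - j - (α + β) : ℕ) := by
    rw [degree_map_eq_of_injective hf, degree_eq_natDegree hP_ne]
    congr 1
    lia
  obtain ⟨rfl, rfl⟩ := symmetric_division_unique
    (by rwa [coeff_map, map_ne_zero_iff f hf])
    (by rwa [degree_map_eq_of_injective hf, degree_map_eq_of_injective hf]) (hPdeg ▸ hT) hdiv
  exact ⟨(mem_lifts _).2 ⟨Q', rfl⟩, (mem_lifts _).2 ⟨T', rfl⟩⟩

/-- Fraction-free divisions: if `(S_j, S_{j+1})` is `(α,β)`-defective with `1 ≤ j ≤ d-1` and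
`k = j+α+β`, then the symmetric quotient and the symmetric remainder of
`lc(S_{j+1})·S_k(0)·S_j` by `S_{j+1}` have all their coefficients in `D`. -/
theorem symmetric_division_fraction_free (D : Subring ℂ) (A B : Polynomial D) (d j α β : ℕ)
    (hAdeg : A.degree = (d : ℕ)) (hBdeg : B.degree = (d : ℕ))
    (hAval : A.coeff 0 ≠ 0) (hBval : B.coeff 0 ≠ 0)
    (hj1 : 1 ≤ j) (hjd : j < d)
    (hdef : IsDefective A B d j α β) :
    ∀ Q R : Polynomial ℂ,
      Q.degree = ((α + β : ℕ) : WithBot ℕ) →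
      R.degree < ((d - j - (α + β) : ℕ) : WithBot ℕ) →
      (C ((symSubres A B d (j + 1)).leadingCoeff *
          (symSubres A B d (j + α + β)).coeff 0) * symSubres A B d j).map D.subtype =
        Q * ((symSubres A B d (j + 1)).map D.subtype /ₘ X ^ α) + X ^ β * R →
      (∀ n, Q.coeff n ∈ D) ∧ (∀ n, R.coeff n ∈ D) := by
  intro Q R _ hR hdiv
  obtain ⟨-, -, hne, hα, hβ⟩ := hdef
  have hlifts := symmetric_division_fraction_free_general Subtype.val_injective
    (natDegree_eq_of_degree_eq_some hAdeg) hAval (natDegree_le_of_degree_le hBdeg.le) hne hα hβ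
    hR hdiv
  simpa only [lifts_iff_coeff_lifts, Subring.coe_subtype, Subtype.range_coe_subtype,
    Set.mem_ofPred_eq] using hlifts
end
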